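/- Let G be a group of type FP_m with finite generating set and word metric, and let χ : G → ℝ be a nonzero character. Then the following are equivalent: (1) χ ∈ Σ^m(G;ℤ); (2) there exists (k₀,…,k_m) ∈ ℕ^{m+1} such that for each q = 0,…,m−1, reduced q-cycles at scale k_q on G_χ bound at scale k_{q+1} on G_χ; (3) there exists k₀ ≥ 0 such that for every k ≥ k₀ there is a chain endomorphism of ℤG-complexes (φ_q)_{q=0,…,m} on (C_q^k(G))_{q=0,…,m} extending the identity on ℤ with v_χ(φ_q(c)) − v_χ(c) > 0 for every nonzero c ∈ C_q^k(G) and every q = 0,…,m. -/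

import Mathlib

open Finsupp

variable {G : Type*} [Group G]

/-- Word length with respect to a generating set `X`. -/
noncomputable def wordLength (X : Finset G) (g : G) : ℕ :=
  sInf {n : ℕ | ∃ w : List G, w.length = n ∧ (∀ x ∈ w, x ∈ X ∨ x⁻¹ ∈ X) ∧ w.prod = g}

/-- The left-invariant word metric `d(g,h) = l(g⁻¹h)`. -/
noncomputable def wordDist (X : Finset G) (g h : G) : ℕ :=
  wordLength X (g⁻¹ * h)

/-- `c` is a chain in `C_q^k(S)`: its support consists of `(q+1)`-tuples of elements of `S`
that are pairwise at distance at most `k`. -/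
def VRChain (X : Finset G) (S : Set G) (q k : ℕ) (c : (Fin (q + 1) → G) →₀ ℤ) : Prop :=
  ∀ σ ∈ c.support, (∀ i, σ i ∈ S) ∧ ∀ i j, wordDist X (σ i) (σ j) ≤ k

/-- The simplicial boundary map `∂_{q+1} : ℤ[G^{q+2}] → ℤ[G^{q+1}]`. -/
noncomputable def bnd (q : ℕ) :
    ((Fin (q + 2) → G) →₀ ℤ) →ₗ[ℤ] ((Fin (q + 1) → G) →₀ ℤ) :=
  Finsupp.lift _ ℤ _
    (fun σ => ∑ i : Fin (q + 2), ((-1 : ℤ) ^ (i : ℕ)) • Finsupp.single (σ ∘ i.succAbove) (1 : ℤ))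

/-- The augmentation `ε : ℤ[G] → ℤ` sending every vertex to `1`. -/
noncomputable def aug : ((Fin 1 → G) →₀ ℤ) →ₗ[ℤ] ℤ :=
  Finsupp.lift ℤ ℤ (Fin 1 → G) (fun _ => (1 : ℤ))

/-- Reduced `q`-cycles at scale `k` on `S` bound at scale `l` on `S`. -/
def BoundsAt (X : Finset G) (S : Set G) : ℕ → ℕ → ℕ → Prop
  | 0, k, l => ∀ z : (Fin 1 → G) →₀ ℤ, VRChain X S 0 k z → aug z = 0 →
      ∃ c : (Fin 2 → G) →₀ ℤ, VRChain X S 1 l c ∧ bnd 0 c = z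
  | (q + 1), k, l => ∀ z : (Fin (q + 2) → G) →₀ ℤ, VRChain X S (q + 1) k z → bnd q z = 0 →
      ∃ c : (Fin (q + 3) → G) →₀ ℤ, VRChain X S (q + 2) l c ∧ bnd (q + 1) c = z

/-- `S ⊆ G` is of type `FP_m`. -/
def TypeFP (X : Finset G) (S : Set G) (m : ℕ) : Prop :=
  ∀ q < m, ∀ k : ℕ, ∃ l ≥ k, BoundsAt X S q k l

/-- A character on `G` is a homomorphism to the additive reals. -/
def IsCharacter (χ : G → ℝ) : Prop :=
  ∀ g h : G, χ (g * h) = χ g + χ h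

/-- Simultaneous left translation on chains, making `ℤ[G^{q+1}]` a `ℤG`-module. -/
noncomputable def lTranslate (g : G) (q : ℕ) :
    ((Fin (q + 1) → G) →₀ ℤ) →ₗ[ℤ] ((Fin (q + 1) → G) →₀ ℤ) :=
  Finsupp.lmapDomain ℤ ℤ (fun σ i => g * σ i)

/-- A chain endomorphism of `ℤG`-complexes on `(C_q^k(G))_{q=0,…,m}` extending the identity
on `ℤ`: each `φ q` maps scale-`k` chains to scale-`k` chains, is `G`-equivariant,
satisfies `ε ∘ φ₀ = ε` and commutes with the boundary maps. -/
def IsChainEndo (X : Finset G) (k m : ℕ)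
    (φ : ∀ q : ℕ, ((Fin (q + 1) → G) →₀ ℤ) →ₗ[ℤ] ((Fin (q + 1) → G) →₀ ℤ)) : Prop :=
  (∀ q ≤ m, ∀ c, VRChain X Set.univ q k c → VRChain X Set.univ q k (φ q c)) ∧
  (∀ q ≤ m, ∀ (g : G) (c), VRChain X Set.univ q k c →
    φ q (lTranslate g q c) = lTranslate g q (φ q c)) ∧
  (∀ c : (Fin 1 → G) →₀ ℤ, VRChain X Set.univ 0 k c → aug (φ 0 c) = aug c) ∧
  (∀ q : ℕ, q + 1 ≤ m → ∀ c : (Fin (q + 2) → G) →₀ ℤ, VRChain X Set.univ (q + 1) k c →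
    bnd q (φ (q + 1) c) = φ q (bnd q c))

/-- The valuation of a simplex: `v(σ) = min_i χ(g_i)` (with values in `EReal`). -/
noncomputable def vsimp (χ : G → ℝ) {q : ℕ} (σ : Fin (q + 1) → G) : EReal :=
  ⨅ i, (χ (σ i) : EReal)

/-- The valuation of a chain: the minimum of the valuations of the simplices in its support
(`⊤` for the zero chain). -/
noncomputable def vchain (χ : G → ℝ) {q : ℕ} (c : (Fin (q + 1) → G) →₀ ℤ) : EReal :=
  ⨅ σ ∈ c.support, vsimp χ σ

/-!
A raising endomorphism `φ` turns fillings in `G` into fillings in `G_χ`. If `z = ∂c` is a cycle in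
`G_χ`, then `φᴺ c` fills `φᴺ z` and lies in `G_χ` for large `N`. Since `G` is of type `FP_m`, `φ` is
equivariantly homotopic to the identity at a larger scale, and since `G` acts cocompactly on
simplices, the homotopy lowers valuations by at most `-D` for a constant `D ≤ 0`. The homotopies
from `φⁱ z` to `φⁱ⁺¹ z` therefore correct `φᴺ c` to a filling of `z` above level `D`, at a scale
that does not depend on `z`. Right translation by an element `t` with `χ t ≥ -D` moves every vertex
by a bounded distance; it brings this filling into `G_χ`, where the prism joins `z` to its
translate.

Conversely, a connecting vector yields a raising endomorphism degree by degree: on vertices take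
right translation by `t` with `χ t > 0`, and if `φ_q` raises valuations by `χ t`, the cycle
`φ_q (∂σ)` lies in a left translate of `G_χ`, where it bounds without losing valuation; fillings of
simplices based at `1` extend equivariantly because `G` acts freely on simplices.
-/

section TupleChains

variable {α β γ : Type*}

/-- Integral chains on `n`-tuples of vertices. They are indexed by the number of vertices rather
than by the degree `n - 1`, so that `n = 0` is the term `ℤ` of the augmented complex. -/
abbrev TupleChain (α : Type*) (n : ℕ) : Type _ :=
  (Fin n → α) →₀ ℤ

/-- The boundary map of the augmented simplicial complex: it is `bnd` in positive degrees and the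
augmentation `aug` in degree zero. -/
noncomputable def augBnd (n : ℕ) : TupleChain α (n + 1) →ₗ[ℤ] TupleChain α n :=
  Finsupp.lift _ ℤ _
    (fun σ => ∑ i : Fin (n + 1), ((-1 : ℤ) ^ (i : ℕ)) • single (σ ∘ i.succAbove) (1 : ℤ))

/-- The chain map induced by a map of vertices. -/
noncomputable def vertexMap (f : α → β) (n : ℕ) : TupleChain α n →ₗ[ℤ] TupleChain β n :=
  Finsupp.lmapDomain ℤ ℤ (f ∘ ·)

/-- The cone operator with apex `a`, the contracting homotopy of the full simplex on `α`. -/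
noncomputable def coneMap (a : α) (n : ℕ) : TupleChain α n →ₗ[ℤ] TupleChain α (n + 1) :=
  Finsupp.lmapDomain ℤ ℤ (Fin.cons (α := fun _ => α) a)

theorem augBnd_single {n : ℕ} (σ : Fin (n + 1) → α) :
    augBnd n (single σ 1) = ∑ i : Fin (n + 1), (-1 : ℤ) ^ (i : ℕ) • single (σ ∘ i.succAbove) 1 := by
  simp [augBnd]

theorem augBnd_succ (q : ℕ) : augBnd (α := α) (q + 1) = bnd q := rfl

theorem augBnd_zero (c : TupleChain α 1) : augBnd 0 c = single default (aug c) := by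
  suffices h : augBnd 0 = lsingle default ∘ₗ aug (G := α) from LinearMap.congr_fun h c
  ext σ : 2
  simp [augBnd_single, aug, Subsingleton.elim _ (default : Fin 0 → α)]

theorem vertexMap_single (f : α → β) {n : ℕ} (σ : Fin n → α) (a : ℤ) :
    vertexMap f n (single σ a) = single (f ∘ σ) a := by
  simp [vertexMap]

theorem vertexMap_id (n : ℕ) (c : TupleChain α n) : vertexMap id n c = c :=
  Finsupp.mapDomain_id

theorem vertexMap_vertexMap (g : β → γ) (f : α → β) (n : ℕ) (c : TupleChain α n) :
    vertexMap g n (vertexMap f n c) = vertexMap (g ∘ f) n c :=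
  Finsupp.mapDomain_comp.symm

theorem vertexMap_zero_congr (f g : α → β) : vertexMap f 0 = vertexMap g 0 := by
  rw [vertexMap, vertexMap, Subsingleton.elim (f ∘ · : (Fin 0 → α) → Fin 0 → β) (g ∘ ·)]

theorem coneMap_single (a : α) {n : ℕ} (σ : Fin n → α) (b : ℤ) :
    coneMap a n (single σ b) = single (Fin.cons a σ : Fin (n + 1) → α) b := by
  simp [coneMap]

theorem augBnd_vertexMap (f : α → β) {n : ℕ} (c : TupleChain α (n + 1)) :
    augBnd n (vertexMap f (n + 1) c) = vertexMap f n (augBnd n c) := by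
  suffices h : augBnd n ∘ₗ vertexMap f (n + 1) = vertexMap f n ∘ₗ augBnd n from
    LinearMap.congr_fun h c
  ext σ : 2
  simp [vertexMap_single, augBnd_single, Function.comp_assoc]

theorem augBnd_coneMap_zero (a : α) (c : TupleChain α 0) : augBnd 0 (coneMap a 0 c) = c := by
  suffices h : augBnd 0 ∘ₗ coneMap a 0 = LinearMap.id from LinearMap.congr_fun h c
  ext σ : 2
  simp [coneMap_single, augBnd_single, Subsingleton.elim _ σ]

theorem augBnd_coneMap_succ (a : α) {n : ℕ} (c : TupleChain α (n + 1)) :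
    augBnd (n + 1) (coneMap a (n + 1) c) = c - coneMap a n (augBnd n c) := by
  suffices h : augBnd (n + 1) ∘ₗ coneMap a (n + 1) = LinearMap.id - coneMap a n ∘ₗ augBnd n from
    LinearMap.congr_fun h c
  ext σ : 2
  have face_zero : (Fin.cons a σ : Fin (n + 2) → α) ∘ Fin.succ = σ := rfl
  have face_succ (i : Fin (n + 1)) : (Fin.cons a σ : Fin (n + 2) → α) ∘ i.succ.succAbove =
      (Fin.cons a (σ ∘ i.succAbove) : Fin (n + 1) → α) := by
    funext j
    cases j using Fin.cases <;> simp
  simp [coneMap_single, augBnd_single, Fin.sum_univ_succ (n := n + 1), face_zero, face_succ,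
    pow_succ, sub_eq_add_neg]

theorem augBnd_augBnd {n : ℕ} (c : TupleChain α (n + 2)) : augBnd n (augBnd (n + 1) c) = 0 := by
  suffices h : augBnd n ∘ₗ augBnd (n + 1) = (0 : TupleChain α (n + 2) →ₗ[ℤ] TupleChain α n) from
    LinearMap.congr_fun h c
  clear c
  induction n with
  | zero =>
    ext σ : 2
    rw [LinearMap.comp_apply, LinearMap.comp_apply, lsingle_apply, ← Fin.cons_self_tail σ,
      ← coneMap_single]
    simp [augBnd_coneMap_succ, augBnd_coneMap_zero]
  | succ n ih =>
    ext σ : 2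
    rw [LinearMap.comp_apply, LinearMap.comp_apply, lsingle_apply, ← Fin.cons_self_tail σ,
      ← coneMap_single]
    have ih' := LinearMap.congr_fun ih
    simp only [LinearMap.comp_apply] at ih'
    simp [augBnd_coneMap_succ, ih']

/-- The acyclic-carrier homotopy between the chain maps induced by `f` and `g`: on a simplex, the
cone with apex the `f`-image of its first vertex over the cycle that has to be filled. -/
noncomputable def prism (f g : α → β) : ∀ n : ℕ, TupleChain α n →ₗ[ℤ] TupleChain β (n + 1)
  | 0 => 0
  | n + 1 => Finsupp.lift _ ℤ _ fun σ => coneMap (f (σ 0)) (n + 1)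
      (vertexMap g (n + 1) (single σ 1) - vertexMap f (n + 1) (single σ 1) -
        prism f g n (augBnd n (single σ 1)))

theorem prism_single (f g : α → β) {n : ℕ} (σ : Fin (n + 1) → α) :
    prism f g (n + 1) (single σ 1) = coneMap (f (σ 0)) (n + 1)
      (vertexMap g (n + 1) (single σ 1) - vertexMap f (n + 1) (single σ 1) -
        prism f g n (augBnd n (single σ 1))) := by
  simp [prism]

theorem augBnd_prism (f g : α → β) {n : ℕ} (c : TupleChain α (n + 1)) :
    augBnd (n + 1) (prism f g (n + 1) c) =
      vertexMap g (n + 1) c - vertexMap f (n + 1) c - prism f g n (augBnd n c) := by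
  suffices h : augBnd (n + 1) ∘ₗ prism f g (n + 1) =
      vertexMap g (n + 1) - vertexMap f (n + 1) - prism f g n ∘ₗ augBnd n from
    LinearMap.congr_fun h c
  clear c
  induction n with
  | zero =>
    ext σ : 2
    simp only [LinearMap.comp_apply, LinearMap.sub_apply, lsingle_apply, prism_single]
    rw [augBnd_coneMap_succ, sub_eq_self]
    simp only [map_sub, augBnd_vertexMap, vertexMap_zero_congr g f, sub_self, prism,
      LinearMap.zero_apply, map_zero]
  | succ n ih =>
    have ih' := LinearMap.congr_fun ih
    simp only [LinearMap.comp_apply, LinearMap.sub_apply] at ih'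
    ext σ : 2
    simp only [LinearMap.comp_apply, LinearMap.sub_apply, lsingle_apply, prism_single]
    rw [augBnd_coneMap_succ, sub_eq_self, map_sub (augBnd (n + 1)), map_sub (augBnd (n + 1)),
      ih', augBnd_augBnd]
    simp [augBnd_vertexMap]

end TupleChains

section CliqueChains

variable {α β : Type*} {r : α → α → Prop} {s : β → β → Prop} {n : ℕ}

/-- Chains supported on the tuples of pairwise `r`-related vertices. The pairs `(i, i)` count, so
`r` can also constrain single vertices. -/
def cliqueChains (r : α → α → Prop) (n : ℕ) : Submodule ℤ (TupleChain α n) :=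
  Finsupp.supported ℤ ℤ {σ | ∀ i j, r (σ i) (σ j)}

theorem cliqueChains_le_iff {N : Submodule ℤ (TupleChain α n)} :
    cliqueChains r n ≤ N ↔ ∀ σ : Fin n → α, (∀ i j, r (σ i) (σ j)) → single σ 1 ∈ N := by
  rw [cliqueChains, Finsupp.supported_eq_span_single, Submodule.span_le, Set.image_subset_iff]
  rfl

theorem single_mem_cliqueChains {σ : Fin n → α} (hσ : ∀ i j, r (σ i) (σ j)) :
    single σ 1 ∈ cliqueChains r n :=
  cliqueChains_le_iff.1 le_rfl σ hσ

theorem cliqueChains_mono {r' : α → α → Prop} (h : ∀ x y, r x y → r' x y) :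
    cliqueChains r n ≤ cliqueChains r' n :=
  Finsupp.supported_mono fun _ hσ i j => h _ _ (hσ i j)

theorem augBnd_mem_cliqueChains {c : TupleChain α (n + 1)} (hc : c ∈ cliqueChains r (n + 1)) :
    augBnd n c ∈ cliqueChains r n := by
  suffices h : cliqueChains r (n + 1) ≤ (cliqueChains r n).comap (augBnd n) from h hc
  refine cliqueChains_le_iff.2 fun σ hσ => ?_
  rw [Submodule.mem_comap, augBnd_single]
  exact sum_mem fun i _ => Submodule.smul_mem _ _
    (single_mem_cliqueChains fun j j' => hσ (i.succAbove j) (i.succAbove j'))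

theorem vertexMap_mem_cliqueChains {f : α → β} (hf : ∀ x y, r x y → s (f x) (f y))
    {c : TupleChain α n} (hc : c ∈ cliqueChains r n) : vertexMap f n c ∈ cliqueChains s n := by
  suffices h : cliqueChains r n ≤ (cliqueChains s n).comap (vertexMap f n) from h hc
  refine cliqueChains_le_iff.2 fun σ hσ => ?_
  rw [Submodule.mem_comap, vertexMap_single]
  exact single_mem_cliqueChains fun i j => hf _ _ (hσ i j)

theorem coneMap_mem_cliqueChains {a : α} (ha : ∀ x, r x x → r a x ∧ r x a) (haa : r a a)
    {c : TupleChain α n} (hc : c ∈ cliqueChains r n) : coneMap a n c ∈ cliqueChains r (n + 1) := by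
  suffices h : cliqueChains r n ≤ (cliqueChains r (n + 1)).comap (coneMap a n) from h hc
  refine cliqueChains_le_iff.2 fun σ hσ => ?_
  rw [Submodule.mem_comap, coneMap_single]
  refine single_mem_cliqueChains fun i j => ?_
  cases i using Fin.cases <;> cases j using Fin.cases <;> simp [haa, ha _ (hσ _ _), hσ _ _]

theorem prism_mem_cliqueChains_of_mapsTo {f g : α → β} {U : Set α} {V : Set β}
    (hf : Set.MapsTo f U V) (hg : Set.MapsTo g U V) {c : TupleChain α n}
    (hc : c ∈ cliqueChains (fun x _ => x ∈ U) n) :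
    prism f g n c ∈ cliqueChains (fun x _ => x ∈ V) (n + 1) := by
  induction n with
  | zero => simp [prism]
  | succ n ih =>
    suffices h : cliqueChains (fun x _ => x ∈ U) (n + 1) ≤
        (cliqueChains (fun x _ => x ∈ V) (n + 2)).comap (prism f g (n + 1)) from h hc
    refine cliqueChains_le_iff.2 fun σ hσ => ?_
    have hσU := single_mem_cliqueChains (r := fun x _ => x ∈ U) hσ
    have hσ₀ : f (σ 0) ∈ V := hf (hσ 0 0)
    rw [Submodule.mem_comap, prism_single]
    exact coneMap_mem_cliqueChains (fun x hx => ⟨hσ₀, hx⟩) hσ₀ <| sub_mem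
      (sub_mem (vertexMap_mem_cliqueChains (fun _ _ h => hg h) hσU)
        (vertexMap_mem_cliqueChains (fun _ _ h => hf h) hσU))
      (ih (augBnd_mem_cliqueChains hσU))

theorem prism_mem_cliqueChains {f g : α → β}
    (h : ∀ x y, r x y → ∀ a ∈ ({f x, g x} : Set β), ∀ b ∈ ({f y, g y} : Set β), s a b)
    {c : TupleChain α n} (hc : c ∈ cliqueChains r n) : prism f g n c ∈ cliqueChains s (n + 1) := by
  suffices h : cliqueChains r n ≤ (cliqueChains s (n + 1)).comap (prism f g n) from h hc
  refine cliqueChains_le_iff.2 fun σ hσ => ?_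
  have hmem : prism f g n (single σ 1) ∈
      cliqueChains (fun x _ => x ∈ {x | ∃ i, x ∈ ({f (σ i), g (σ i)} : Set β)}) (n + 1) := by
    refine prism_mem_cliqueChains_of_mapsTo (U := Set.range σ) ?_ ?_
      (single_mem_cliqueChains fun i _ => Set.mem_range_self i)
    · rintro _ ⟨i, rfl⟩
      exact ⟨i, Or.inl rfl⟩
    · rintro _ ⟨i, rfl⟩
      exact ⟨i, Or.inr rfl⟩
  refine Finsupp.supported_mono (fun τ hτ i j => ?_) hmem
  obtain ⟨i', hi⟩ := hτ i i
  obtain ⟨j', hj⟩ := hτ j j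
  exact h _ _ (hσ i' j') _ hi _ hj

end CliqueChains


section WordMetric

variable {X : Finset G}

theorem wordLength_prod_le {w : List G} (hw : ∀ x ∈ w, x ∈ X ∨ x⁻¹ ∈ X) :
    wordLength X w.prod ≤ w.length :=
  Nat.sInf_le ⟨w, rfl, hw, rfl⟩

theorem wordLength_one : wordLength X (1 : G) = 0 := by
  simpa using wordLength_prod_le (X := X) (w := []) (by simp)

theorem wordDist_self (x : G) : wordDist X x x = 0 := by
  rw [wordDist, inv_mul_cancel, wordLength_one]

theorem wordDist_mul_left (g x y : G) : wordDist X (g * x) (g * y) = wordDist X x y := by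
  simp [wordDist, mul_assoc]

theorem exists_list_length_eq_wordLength (hX : Subgroup.closure (X : Set G) = ⊤) (g : G) :
    ∃ w : List G, w.length = wordLength X g ∧ (∀ x ∈ w, x ∈ X ∨ x⁻¹ ∈ X) ∧ w.prod = g := by
  have hg : g ∈ (Subgroup.closure (X : Set G)).toSubmonoid := hX ▸ Subgroup.mem_top g
  rw [Subgroup.closure_toSubmonoid] at hg
  obtain ⟨w, hw, hprod⟩ := Submonoid.exists_list_of_mem_closure hg
  exact Nat.sInf_mem (s := {n : ℕ | ∃ w : List G, w.length = n ∧ (∀ x ∈ w, x ∈ X ∨ x⁻¹ ∈ X) ∧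
    w.prod = g}) ⟨_, w, rfl, hw, hprod⟩

theorem wordLength_mul_le (hX : Subgroup.closure (X : Set G) = ⊤) (g h : G) :
    wordLength X (g * h) ≤ wordLength X g + wordLength X h := by
  obtain ⟨u, hu, huX, rfl⟩ := exists_list_length_eq_wordLength hX g
  obtain ⟨w, hw, hwX, rfl⟩ := exists_list_length_eq_wordLength hX h
  rw [← hu, ← hw, ← List.prod_append, ← List.length_append]
  refine wordLength_prod_le fun x hx => ?_
  rcases List.mem_append.1 hx with hxu | hxw
  exacts [huX x hxu, hwX x hxw]

theorem wordLength_inv_le (hX : Subgroup.closure (X : Set G) = ⊤) (g : G) :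
    wordLength X g⁻¹ ≤ wordLength X g := by
  obtain ⟨w, hw, hwX, rfl⟩ := exists_list_length_eq_wordLength hX g
  rw [← hw, List.prod_inv_reverse]
  refine (wordLength_prod_le fun x hx => ?_).trans (by simp)
  obtain ⟨y, hy, rfl⟩ := List.mem_map.1 (List.mem_reverse.1 hx)
  simpa [or_comm] using hwX y hy

theorem wordDist_mul_mul_le (hX : Subgroup.closure (X : Set G) = ⊤) (x y a b : G) :
    wordDist X (x * a) (y * b) ≤ wordDist X x y + wordLength X a + wordLength X b := by
  have hab : (x * a)⁻¹ * (y * b) = a⁻¹ * (x⁻¹ * y) * b := by group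
  have h₁ := wordLength_mul_le hX (a⁻¹ * (x⁻¹ * y)) b
  have h₂ := wordLength_mul_le hX a⁻¹ (x⁻¹ * y)
  have h₃ := wordLength_inv_le hX a
  rw [wordDist, hab, wordDist]
  omega

theorem wordDist_le_of_mem_pair (hX : Subgroup.closure (X : Set G) = ⊤) {x y t a b : G}
    (ha : a ∈ ({x, x * t} : Set G)) (hb : b ∈ ({y, y * t} : Set G)) :
    wordDist X a b ≤ wordDist X x y + 2 * wordLength X t := by
  have key {u v : G} (hu : u = 1 ∨ u = t) (hv : v = 1 ∨ v = t) :
      wordDist X (x * u) (y * v) ≤ wordDist X x y + 2 * wordLength X t := by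
    have h₁ := wordLength_one (X := X)
    have h₂ := wordDist_mul_mul_le hX x y u v
    rcases hu with rfl | rfl <;> rcases hv with rfl | rfl <;> omega
  rcases ha with rfl | rfl <;> rcases hb with rfl | rfl
  · simp
  · simpa using key (.inl rfl) (.inr rfl)
  · simpa using key (.inr rfl) (.inl rfl)
  · exact key (.inr rfl) (.inr rfl)

theorem finite_setOf_wordLength_le (hX : Subgroup.closure (X : Set G) = ⊤) (k : ℕ) :
    {g : G | wordLength X g ≤ k}.Finite := by
  have : Finite {x : G | x ∈ X ∨ x⁻¹ ∈ X} :=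
    (X.finite_toSet.union (X.finite_toSet.preimage inv_injective.injOn)).to_subtype
  refine ((List.finite_length_le {x : G | x ∈ X ∨ x⁻¹ ∈ X} k).image
    fun w => (w.map Subtype.val).prod).subset fun g hg => ?_
  obtain ⟨w, hw, hwX, rfl⟩ := exists_list_length_eq_wordLength hX g
  refine ⟨w.attach.map fun x => ⟨x.1, hwX _ x.2⟩, ?_, ?_⟩
  · simpa [hw] using hg
  · simp [Function.comp_def]

theorem finite_setOf_simplex_apply_zero_eq_one (hX : Subgroup.closure (X : Set G) = ⊤) (k n : ℕ) :
    {σ : Fin (n + 1) → G | (∀ i j, wordDist X (σ i) (σ j) ≤ k) ∧ σ 0 = 1}.Finite := by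
  refine (Set.Finite.pi' fun _ => finite_setOf_wordLength_le hX k).subset fun σ hσ i => ?_
  simpa [wordDist, hσ.2] using hσ.1 0 i

end WordMetric

section Characters

variable {χ : G → ℝ}

/-- A character as a bundled homomorphism, to which Mathlib's lemmas on homomorphisms apply. -/
def IsCharacter.toAddMonoidHom (hχ : IsCharacter χ) : Additive G →+ ℝ :=
  AddMonoidHom.mk' (fun g => χ g.toMul) fun g h => hχ g.toMul h.toMul

namespace IsCharacter

theorem zero : IsCharacter (0 : G → ℝ) := fun _ _ => (add_zero 0).symm

theorem map_inv (hχ : IsCharacter χ) (g : G) : χ g⁻¹ = -χ g :=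
  map_neg hχ.toAddMonoidHom (.ofMul g)

theorem map_pow (hχ : IsCharacter χ) (g : G) (n : ℕ) : χ (g ^ n) = n • χ g :=
  map_nsmul hχ.toAddMonoidHom n (.ofMul g)

theorem exists_le_apply (hχ : IsCharacter χ) (hne : ∃ g, χ g ≠ 0) (r : ℝ) : ∃ t, r ≤ χ t := by
  obtain ⟨t, ht⟩ : ∃ t, 0 < χ t := by
    obtain ⟨g, hg⟩ := hne
    rcases hg.lt_or_gt with hneg | hpos
    · exact ⟨g⁻¹, by rw [hχ.map_inv]; exact neg_pos.2 hneg⟩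
    · exact ⟨g, hpos⟩
  obtain ⟨n, hn⟩ := Archimedean.arch r ht
  exact ⟨t ^ n, by rwa [hχ.map_pow]⟩

end IsCharacter

/-- The half-space of a character; `halfSpace χ 0` is the monoid `G_χ`. -/
abbrev halfSpace (χ : G → ℝ) (r : ℝ) : Set G :=
  {g | r ≤ χ g}

end Characters

section RipsChains

theorem exists_vchain_eq {α : Type*} (χ : α → ℝ) {q : ℕ} {c : TupleChain α (q + 1)} (hc : c ≠ 0) :
    ∃ σ ∈ c.support, ∃ i, vchain χ c = χ (σ i) := by
  obtain ⟨σ, hσ, hσmin⟩ :=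
    c.support.exists_min_image (vsimp χ) (Finsupp.support_nonempty_iff.2 hc)
  obtain ⟨i, hi⟩ := exists_eq_ciInf_of_finite (f := fun i => (χ (σ i) : EReal))
  exact ⟨σ, hσ, i, (le_antisymm (iInf₂_le σ hσ) (le_iInf₂ hσmin)).trans hi.symm⟩

variable {X : Finset G} {S T : Set G} {k l n : ℕ} {χ : G → ℝ}

/-- The chain group `C_{n-1}^k(S)`; membership in `S` is imposed through the pairs `(i, i)` of
`cliqueChains`. -/
def ripsChains (X : Finset G) (S : Set G) (k n : ℕ) : Submodule ℤ (TupleChain G n) :=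
  cliqueChains (fun x y => x ∈ S ∧ wordDist X x y ≤ k) n

theorem ripsChains_mono (hS : S ⊆ T) (hk : k ≤ l) : ripsChains X S k n ≤ ripsChains X T l n :=
  cliqueChains_mono fun _ _ h => ⟨hS h.1, h.2.trans hk⟩

theorem ripsChains_le_univ : ripsChains X S k n ≤ ripsChains X Set.univ k n :=
  ripsChains_mono (Set.subset_univ S) le_rfl

theorem ripsChains_halfSpace_anti {r r' : ℝ} (hr : r' ≤ r) :
    ripsChains X (halfSpace χ r) k n ≤ ripsChains X (halfSpace χ r') k n :=
  ripsChains_mono (fun _ hg => hr.trans hg) le_rfl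

theorem single_mem_ripsChains {σ : Fin n → G} (hS : ∀ i, σ i ∈ S)
    (hk : ∀ i j, wordDist X (σ i) (σ j) ≤ k) : single σ 1 ∈ ripsChains X S k n :=
  single_mem_cliqueChains fun i j => ⟨hS i, hk i j⟩

theorem ripsChains_le_iff {N : Submodule ℤ (TupleChain G n)} :
    ripsChains X S k n ≤ N ↔ ∀ σ : Fin n → G, (∀ i, σ i ∈ S) →
      (∀ i j, wordDist X (σ i) (σ j) ≤ k) → single σ 1 ∈ N := by
  rw [ripsChains, cliqueChains_le_iff]
  exact ⟨fun h σ hS hk => h σ fun i j => ⟨hS i, hk i j⟩,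
    fun h σ hσ => h σ (fun i => (hσ i i).1) fun i j => (hσ i j).2⟩

theorem augBnd_mem_ripsChains {c : TupleChain G (n + 1)} (hc : c ∈ ripsChains X S k (n + 1)) :
    augBnd n c ∈ ripsChains X S k n :=
  augBnd_mem_cliqueChains hc

theorem vertexMap_mul_left_mem_ripsChains (hχ : IsCharacter χ) {r : ℝ} (g : G)
    {c : TupleChain G n} (hc : c ∈ ripsChains X (halfSpace χ r) k n) :
    vertexMap (g * ·) n c ∈ ripsChains X (halfSpace χ (χ g + r)) k n := by
  refine vertexMap_mem_cliqueChains (fun x y hxy => ⟨?_, ?_⟩) hc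
  · rw [Set.mem_ofPred_eq, hχ]
    exact add_le_add_right hxy.1 _
  · rw [wordDist_mul_left]
    exact hxy.2

theorem vRChain_iff {q : ℕ} {c : TupleChain G (q + 1)} :
    VRChain X S q k c ↔ c ∈ ripsChains X S k (q + 1) := by
  simp only [VRChain, ripsChains, cliqueChains, Finsupp.mem_supported, Set.subset_def,
    Finset.mem_coe, Set.mem_ofPred_eq, forall_and, forall_const]

theorem boundsAt_iff {q : ℕ} :
    BoundsAt X S q k l ↔ ∀ z ∈ ripsChains X S k (q + 1), augBnd q z = 0 →
      ∃ c ∈ ripsChains X S l (q + 2), augBnd (q + 1) c = z := by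
  cases q <;>
    simp only [BoundsAt, vRChain_iff, augBnd_zero, Finsupp.single_eq_zero, augBnd_succ]

theorem mem_ripsChains_halfSpace_iff {r : ℝ} {q : ℕ} {c : TupleChain G (q + 1)} :
    c ∈ ripsChains X (halfSpace χ r) k (q + 1) ↔
      c ∈ ripsChains X Set.univ k (q + 1) ∧ (r : EReal) ≤ vchain χ c := by
  simp only [← vRChain_iff, VRChain, vchain, vsimp, le_iInf_iff, EReal.coe_le_coe_iff,
    Set.mem_ofPred_eq, Set.mem_univ, implies_true, true_and]
  exact ⟨fun h => ⟨fun σ hσ => (h σ hσ).2, fun σ hσ => (h σ hσ).1⟩,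
    fun h σ hσ => ⟨h.2 σ hσ, h.1 σ hσ⟩⟩

theorem exists_mem_ripsChains_halfSpace (χ : G → ℝ) {q : ℕ} {c : TupleChain G (q + 1)}
    (hc : c ∈ ripsChains X Set.univ k (q + 1)) :
    ∃ r, c ∈ ripsChains X (halfSpace χ r) k (q + 1) := by
  obtain rfl | hc₀ := eq_or_ne c 0
  · exact ⟨0, zero_mem _⟩
  · obtain ⟨σ, -, i, hi⟩ := exists_vchain_eq χ hc₀
    exact ⟨χ (σ i), mem_ripsChains_halfSpace_iff.2 ⟨hc, hi.ge⟩⟩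

theorem BoundsAt.halfSpace_apply (hχ : IsCharacter χ) {q : ℕ}
    (h : BoundsAt X (halfSpace χ 0) q k l) (g : G) : BoundsAt X (halfSpace χ (χ g)) q k l := by
  refine boundsAt_iff.2 fun z hz hz₀ => ?_
  obtain ⟨c, hc, hcz⟩ := boundsAt_iff.1 h (vertexMap (g⁻¹ * ·) _ z)
    (by simpa [hχ.map_inv] using vertexMap_mul_left_mem_ripsChains hχ g⁻¹ hz)
    (by rw [augBnd_vertexMap, hz₀, map_zero])
  refine ⟨vertexMap (g * ·) _ c, by simpa using vertexMap_mul_left_mem_ripsChains hχ g hc, ?_⟩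
  have hgg : (g * ·) ∘ (g⁻¹ * ·) = id := funext (mul_inv_cancel_left g)
  rw [augBnd_vertexMap, hcz, vertexMap_vertexMap, hgg, vertexMap_id]

/-- Right translation by `t` moves a filling into `G_χ`, and the prism between a cycle in `G_χ` and
its translate stays in `G_χ`. -/
theorem exists_filling_halfSpace_zero (hX : Subgroup.closure (X : Set G) = ⊤)
    (hχ : IsCharacter χ) {t : G} (ht : 0 ≤ χ t) {z : TupleChain G (n + 1)}
    (hz : z ∈ ripsChains X (halfSpace χ 0) k (n + 1)) (hz₀ : augBnd n z = 0)
    {y : TupleChain G (n + 2)} (hy : y ∈ ripsChains X (halfSpace χ (-χ t)) k (n + 2))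
    (hyz : augBnd (n + 1) y = z) :
    ∃ c ∈ ripsChains X (halfSpace χ 0) (k + 2 * wordLength X t) (n + 2),
      augBnd (n + 1) c = z := by
  have hpair {x y a b : G} (hxy : wordDist X x y ≤ k) (ha : a ∈ ({x, x * t} : Set G))
      (hb : b ∈ ({y, y * t} : Set G)) : wordDist X a b ≤ k + 2 * wordLength X t := by
    have := wordDist_le_of_mem_pair hX ha hb
    omega
  have hpos {r : ℝ} {x : G} (hx : r ≤ χ x) : r + χ t ≤ χ (x * t) := by
    rw [hχ]
    exact add_le_add_left hx _
  have htranslate : vertexMap (· * t) _ y ∈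
      ripsChains X (halfSpace χ 0) (k + 2 * wordLength X t) (n + 2) :=
    vertexMap_mem_cliqueChains (fun x y h => ⟨by simpa using hpos h.1,
      hpair h.2 (.inr rfl) (.inr rfl)⟩) hy
  have hprism : prism id (· * t) _ z ∈
      ripsChains X (halfSpace χ 0) (k + 2 * wordLength X t) (n + 2) := by
    refine prism_mem_cliqueChains (fun x y hxy a ha b hb => ⟨?_, hpair hxy.2 ha hb⟩) hz
    rcases ha with rfl | rfl
    · exact hxy.1
    · exact (add_nonneg le_rfl ht).trans (hpos hxy.1)
  refine ⟨vertexMap (· * t) _ y - prism id (· * t) _ z, sub_mem htranslate hprism, ?_⟩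
  rw [map_sub, augBnd_vertexMap, hyz, augBnd_prism, hz₀, map_zero, vertexMap_id, sub_zero,
    sub_sub_cancel]

end RipsChains

section FilteredMaps

variable {X : Finset G} {χ : G → ℝ} {k l n p : ℕ} {δ : ℝ}

/-- `F` commutes with the action of `G` on the chains at scale `k`. -/
def IsEquivariantAt (X : Finset G) (k : ℕ) (F : TupleChain G n →ₗ[ℤ] TupleChain G p) : Prop :=
  ∀ g, ∀ c ∈ ripsChains X Set.univ k n, F (vertexMap (g * ·) n c) = vertexMap (g * ·) p (F c)

/-- `F` is a filtered map of degree `δ`: it sends chains at scale `k` to chains at scale `l` and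
raises the valuation by at least `δ`, which may be negative. -/
def RaisesBy (X : Finset G) (χ : G → ℝ) (δ : ℝ) (k l : ℕ)
    (F : TupleChain G n →ₗ[ℤ] TupleChain G p) : Prop :=
  ∀ r, ∀ c ∈ ripsChains X (halfSpace χ r) k n, F c ∈ ripsChains X (halfSpace χ (r + δ)) l p

theorem exists_equivariant_linearMap {A : Set (Fin (n + 1) → G)}
    {R : (Fin (n + 1) → G) → TupleChain G p → Prop}
    (hA : ∀ g, ∀ σ ∈ A, (g * ·) ∘ σ ∈ A)
    (hR : ∀ g, ∀ σ ∈ A, ∀ c, R σ c → R ((g * ·) ∘ σ) (vertexMap (g * ·) p c))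
    (hex : ∀ σ ∈ A, ∃ c, R σ c) :
    ∃ F : TupleChain G (n + 1) →ₗ[ℤ] TupleChain G p,
      (∀ g c, F (vertexMap (g * ·) (n + 1) c) = vertexMap (g * ·) p (F c)) ∧
      ∀ σ ∈ A, R σ (F (single σ 1)) := by
  choose! ψ hψ using hex
  have translate_comp (g h : G) : (g * ·) ∘ (h * ·) = (g * h * ·) :=
    funext fun x => (mul_assoc g h x).symm
  let F : TupleChain G (n + 1) →ₗ[ℤ] TupleChain G p := Finsupp.lift _ ℤ _ fun σ =>
    vertexMap (σ 0 * ·) p (ψ (((σ 0)⁻¹ * ·) ∘ σ))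
  have F_single (σ : Fin (n + 1) → G) :
      F (single σ 1) = vertexMap (σ 0 * ·) p (ψ (((σ 0)⁻¹ * ·) ∘ σ)) := by
    simp [F]
  refine ⟨F, fun g c => ?_, fun σ hσ => ?_⟩
  · suffices h : F ∘ₗ vertexMap (g * ·) (n + 1) = vertexMap (g * ·) p ∘ₗ F from
      LinearMap.congr_fun h c
    ext σ : 2
    have hbase : ((g * σ 0)⁻¹ * ·) ∘ (g * ·) ∘ σ = ((σ 0)⁻¹ * ·) ∘ σ := by
      funext i
      simp [mul_assoc]
    simp only [LinearMap.comp_apply, lsingle_apply, vertexMap_single, F_single,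
      vertexMap_vertexMap, translate_comp, Function.comp_apply, hbase]
  · have hσ₀ : (σ 0 * ·) ∘ ((σ 0)⁻¹ * ·) ∘ σ = σ := funext fun i => mul_inv_cancel_left _ _
    have hτ := hA (σ 0)⁻¹ σ hσ
    rw [F_single]
    simpa only [hσ₀] using hR (σ 0) _ hτ _ (hψ _ hτ)

theorem RaisesBy.anti {δ' : ℝ} {F : TupleChain G n →ₗ[ℤ] TupleChain G p}
    (hF : RaisesBy X χ δ k l F) (hδ : δ' ≤ δ) : RaisesBy X χ δ' k l F :=
  fun r c hc => ripsChains_halfSpace_anti (add_le_add_right hδ r) (hF r c hc)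

theorem raisesBy_iff {F : TupleChain G (n + 1) →ₗ[ℤ] TupleChain G p} :
    RaisesBy X χ δ k l F ↔ ∀ σ : Fin (n + 1) → G, (∀ i j, wordDist X (σ i) (σ j) ≤ k) →
      ∃ i, F (single σ 1) ∈ ripsChains X (halfSpace χ (χ (σ i) + δ)) l p := by
  refine ⟨fun h σ hσ => ?_, fun h r => ?_⟩
  · obtain ⟨i, hi⟩ := Finite.exists_min fun i => χ (σ i)
    exact ⟨i, h _ _ (single_mem_ripsChains hi hσ)⟩
  · suffices hle : ripsChains X (halfSpace χ r) k (n + 1) ≤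
        (ripsChains X (halfSpace χ (r + δ)) l p).comap F from fun c hc => hle hc
    refine ripsChains_le_iff.2 fun σ hσr hσ => ?_
    obtain ⟨i, hi⟩ := h σ hσ
    exact ripsChains_halfSpace_anti (add_le_add_left (hσr i) δ) hi

theorem RaisesBy.map_mem_univ {q : ℕ} {F : TupleChain G (q + 1) →ₗ[ℤ] TupleChain G p}
    (hF : RaisesBy X χ δ k l F) {c : TupleChain G (q + 1)}
    (hc : c ∈ ripsChains X Set.univ k (q + 1)) : F c ∈ ripsChains X Set.univ l p := by
  obtain ⟨r, hr⟩ := exists_mem_ripsChains_halfSpace χ hc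
  exact ripsChains_le_univ (hF r c hr)

theorem raisesBy_zero_iff {F : TupleChain G (n + 1) →ₗ[ℤ] TupleChain G p} :
    RaisesBy X 0 0 k l F ↔
      ∀ c ∈ ripsChains X Set.univ k (n + 1), F c ∈ ripsChains X Set.univ l p := by
  refine ⟨fun h c => h.map_mem_univ, fun h => raisesBy_iff.2 fun σ hσ => ⟨0, ?_⟩⟩
  exact ripsChains_mono (fun g _ => by simp) le_rfl
    (h _ (single_mem_ripsChains (fun _ => Set.mem_univ _) hσ))

/-- By equivariance it is enough to look at the finitely many simplices based at `1`. -/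
theorem IsEquivariantAt.exists_raisesBy (hX : Subgroup.closure (X : Set G) = ⊤)
    (hχ : IsCharacter χ) {F : TupleChain G (n + 1) →ₗ[ℤ] TupleChain G p}
    (hF : IsEquivariantAt X k F) {P : ℝ → Prop}
    (h : ∀ σ : Fin (n + 1) → G, (∀ i j, wordDist X (σ i) (σ j) ≤ k) →
      ∃ δ, P δ ∧ ∃ i, F (single σ 1) ∈ ripsChains X (halfSpace χ (χ (σ i) + δ)) l p) :
    ∃ δ, P δ ∧ RaisesBy X χ δ k l F := by
  choose! δ hP hδ using h
  obtain ⟨σ₀, ⟨hσ₀, -⟩, hmin⟩ := Set.exists_min_image _ δ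
    (finite_setOf_simplex_apply_zero_eq_one hX k n)
    ⟨fun _ => 1, fun _ _ => by simp [wordDist_self], rfl⟩
  refine ⟨δ σ₀, hP σ₀ hσ₀, raisesBy_iff.2 fun σ hσ => ?_⟩
  have hτ (i j) : wordDist X ((((σ 0)⁻¹ * ·) ∘ σ) i) ((((σ 0)⁻¹ * ·) ∘ σ) j) ≤ k := by
    simpa only [Function.comp_apply, wordDist_mul_left] using hσ i j
  obtain ⟨i, hi⟩ := hδ _ hτ
  have hFσ := vertexMap_mul_left_mem_ripsChains hχ (σ 0) hi
  rw [← hF _ _ (single_mem_ripsChains (fun _ => Set.mem_univ _) hτ), vertexMap_single] at hFσ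
  have hστ : (σ 0 * ·) ∘ ((σ 0)⁻¹ * ·) ∘ σ = σ := funext fun i => mul_inv_cancel_left _ _
  rw [hστ] at hFσ
  refine ⟨i, ripsChains_halfSpace_anti ?_ hFσ⟩
  have hδτ := hmin _ ⟨hτ, inv_mul_cancel (σ 0)⟩
  rw [Function.comp_apply, hχ, hχ.map_inv]
  linarith

theorem IsEquivariantAt.exists_nonpos_raisesBy (hX : Subgroup.closure (X : Set G) = ⊤)
    (hχ : IsCharacter χ) {q : ℕ} {F : TupleChain G (n + 1) →ₗ[ℤ] TupleChain G (q + 1)}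
    (hF : IsEquivariantAt X k F)
    (hl : ∀ c ∈ ripsChains X Set.univ k (n + 1), F c ∈ ripsChains X Set.univ l (q + 1)) :
    ∃ δ ≤ 0, RaisesBy X χ δ k l F := by
  refine hF.exists_raisesBy hX hχ fun σ hσ => ?_
  obtain ⟨r, hr⟩ := exists_mem_ripsChains_halfSpace χ
    (hl _ (single_mem_ripsChains (fun _ => Set.mem_univ _) hσ))
  exact ⟨min 0 (r - χ (σ 0)), min_le_left _ _, 0, ripsChains_halfSpace_anti
    (by linarith [min_le_right 0 (r - χ (σ 0))]) hr⟩

theorem RaisesBy.vchain_sub_pos {q : ℕ} {F : TupleChain G (n + 1) →ₗ[ℤ] TupleChain G (q + 1)}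
    (hF : RaisesBy X χ δ k l F) (hδ : 0 < δ) {c : TupleChain G (n + 1)}
    (hc : c ∈ ripsChains X Set.univ k (n + 1)) (hc₀ : c ≠ 0) :
    0 < vchain χ (F c) - vchain χ c := by
  obtain ⟨σ, -, i, hi⟩ := exists_vchain_eq χ hc₀
  have hFc : ((χ (σ i) + δ : ℝ) : EReal) ≤ vchain χ (F c) :=
    (mem_ripsChains_halfSpace_iff.1 (hF _ c (mem_ripsChains_halfSpace_iff.2 ⟨hc, hi.ge⟩))).2
  calc (0 : EReal) < (δ : EReal) := EReal.coe_pos.2 hδ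
    _ = ((χ (σ i) + δ : ℝ) : EReal) - χ (σ i) := by rw [← EReal.coe_sub, add_sub_cancel_left]
    _ ≤ vchain χ (F c) - vchain χ c := by rw [hi]; exact EReal.sub_le_sub hFc le_rfl

theorem IsEquivariantAt.exists_pos_raisesBy (hX : Subgroup.closure (X : Set G) = ⊤)
    (hχ : IsCharacter χ) {q : ℕ} {F : TupleChain G (n + 1) →ₗ[ℤ] TupleChain G (q + 1)}
    (hF : IsEquivariantAt X k F)
    (hl : ∀ c ∈ ripsChains X Set.univ k (n + 1), F c ∈ ripsChains X Set.univ l (q + 1))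
    (hv : ∀ c ∈ ripsChains X Set.univ k (n + 1), c ≠ 0 → 0 < vchain χ (F c) - vchain χ c) :
    ∃ δ > 0, RaisesBy X χ δ k l F := by
  refine hF.exists_raisesBy hX hχ fun σ hσ => ?_
  have hσk := single_mem_ripsChains (fun i => Set.mem_univ (σ i)) hσ
  obtain ⟨τ, hτ, i, hi⟩ := exists_vchain_eq χ (c := single σ (1 : ℤ)) (by simp)
  obtain rfl : τ = σ := by simpa [Finsupp.single_apply, eq_comm] using hτ
  have hlt : (χ (τ i) : EReal) < vchain χ (F (single τ 1)) := by
    have hpos := hv _ hσk (by simp)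
    rw [hi] at hpos
    by_contra! hle
    refine (EReal.sub_le_sub hle le_rfl).not_gt (lt_of_le_of_lt ?_ hpos)
    rw [← EReal.coe_sub, sub_self, EReal.coe_zero]
  obtain ⟨s, hs, hsF⟩ := EReal.lt_iff_exists_real_btwn.1 hlt
  refine ⟨s - χ (τ i), sub_pos.2 (EReal.coe_lt_coe_iff.1 hs), i, ?_⟩
  rw [add_sub_cancel]
  exact mem_ripsChains_halfSpace_iff.2 ⟨hl _ hσk, hsF.le⟩

theorem BoundsAt.exists_equivariant_filling (hχ : IsCharacter χ) {q l' : ℕ} {t : G}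
    (hb : BoundsAt X (halfSpace χ 0) q l l')
    {f : TupleChain G (n + 1) →ₗ[ℤ] TupleChain G (q + 1)} (hf : IsEquivariantAt X k f)
    (hft : RaisesBy X χ (χ t) k l f)
    (hf₀ : ∀ c ∈ ripsChains X Set.univ k (n + 1), augBnd q (f c) = 0) :
    ∃ F : TupleChain G (n + 1) →ₗ[ℤ] TupleChain G (q + 2),
      IsEquivariantAt X k F ∧ RaisesBy X χ (χ t) k l' F ∧
      ∀ c ∈ ripsChains X Set.univ k (n + 1), augBnd (q + 1) (F c) = f c := by
  have single_mem {σ : Fin (n + 1) → G} (hσ : ∀ i j, wordDist X (σ i) (σ j) ≤ k) :=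
    single_mem_ripsChains (fun i => Set.mem_univ (σ i)) hσ
  obtain ⟨F, hF, hfill⟩ := exists_equivariant_linearMap
    (A := {σ : Fin (n + 1) → G | ∀ i j, wordDist X (σ i) (σ j) ≤ k})
    (R := fun σ c => (∃ i, c ∈ ripsChains X (halfSpace χ (χ (σ i) + χ t)) l' (q + 2)) ∧
      augBnd (q + 1) c = f (single σ 1))
    (fun g σ hσ i j => by simpa only [Function.comp_apply, wordDist_mul_left] using hσ i j)
    (fun g σ hσ c ⟨⟨i, hi⟩, hc⟩ => by
      refine ⟨⟨i, ?_⟩, ?_⟩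
      · rw [Function.comp_apply, hχ, add_assoc]
        exact vertexMap_mul_left_mem_ripsChains hχ g hi
      · rw [augBnd_vertexMap, hc, ← hf g _ (single_mem hσ), vertexMap_single])
    (fun σ hσ => by
      obtain ⟨i, hi⟩ := raisesBy_iff.1 hft σ hσ
      rw [← hχ] at hi
      obtain ⟨c, hc, hcσ⟩ := boundsAt_iff.1 (hb.halfSpace_apply hχ _) _ hi (hf₀ _ (single_mem hσ))
      exact ⟨c, ⟨i, by rwa [← hχ]⟩, hcσ⟩)
  refine ⟨F, fun g c _ => hF g c, raisesBy_iff.2 fun σ hσ => (hfill σ hσ).1, ?_⟩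
  suffices h : ripsChains X Set.univ k (n + 1) ≤ LinearMap.eqLocus (augBnd (q + 1) ∘ₗ F) f from
    fun c hc => h hc
  exact ripsChains_le_iff.2 fun σ _ hσ => (hfill σ hσ).2

theorem BoundsAt.exists_equivariant_filling_univ {q l' : ℕ} (hb : BoundsAt X Set.univ q l l')
    {f : TupleChain G (n + 1) →ₗ[ℤ] TupleChain G (q + 1)} (hf : IsEquivariantAt X k f)
    (hfl : ∀ c ∈ ripsChains X Set.univ k (n + 1), f c ∈ ripsChains X Set.univ l (q + 1))
    (hf₀ : ∀ c ∈ ripsChains X Set.univ k (n + 1), augBnd q (f c) = 0) :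
    ∃ F : TupleChain G (n + 1) →ₗ[ℤ] TupleChain G (q + 2),
      IsEquivariantAt X k F ∧
      (∀ c ∈ ripsChains X Set.univ k (n + 1), F c ∈ ripsChains X Set.univ l' (q + 2)) ∧
      ∀ c ∈ ripsChains X Set.univ k (n + 1), augBnd (q + 1) (F c) = f c := by
  have huniv : Set.univ = halfSpace (0 : G → ℝ) 0 := by
    ext
    simp
  obtain ⟨F, hF, hF₀, hfill⟩ := (huniv ▸ hb).exists_equivariant_filling IsCharacter.zero (t := 1) hf
    (raisesBy_zero_iff.2 hfl) hf₀
  exact ⟨F, hF, raisesBy_zero_iff.1 hF₀, hfill⟩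

end FilteredMaps

section ChainEndomorphisms

variable {X : Finset G} {χ : G → ℝ} {k l q m : ℕ} {δ : ℝ}
  {φ : ∀ q : ℕ, TupleChain G (q + 1) →ₗ[ℤ] TupleChain G (q + 1)}

theorem isChainEndo_iff : IsChainEndo X k m φ ↔
    (∀ q ≤ m, ∀ c ∈ ripsChains X Set.univ k (q + 1), φ q c ∈ ripsChains X Set.univ k (q + 1)) ∧
    (∀ q ≤ m, IsEquivariantAt X k (φ q)) ∧
    (∀ c ∈ ripsChains X Set.univ k 1, augBnd 0 (φ 0 c) = augBnd 0 c) ∧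
    ∀ q, q + 1 ≤ m → ∀ c ∈ ripsChains X Set.univ k (q + 2),
      augBnd (q + 1) (φ (q + 1) c) = φ q (augBnd (q + 1) c) := by
  simp only [IsChainEndo, vRChain_iff, augBnd_zero, (Finsupp.single_injective _).eq_iff,
    augBnd_succ]
  rfl

/-- A chain endomorphism that witnesses condition (3) at the scale `k`: it extends the identity on
`ℤ` and strictly raises valuations in degrees up to `m`. -/
def HasRaisingEndo (X : Finset G) (χ : G → ℝ) (k m : ℕ) : Prop :=
  ∃ φ : ∀ q : ℕ, TupleChain G (q + 1) →ₗ[ℤ] TupleChain G (q + 1),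
    IsChainEndo X k m φ ∧ ∀ q ≤ m, ∀ c : TupleChain G (q + 1), VRChain X Set.univ q k c →
      c ≠ 0 → 0 < vchain χ (φ q c) - vchain χ c

/-- The degree-`q` part of a raising endomorphism under construction: an equivariant filtered map
of degree `δ` that sends cycles to cycles, so that its composite with the boundary can be
filled in degree `q + 1`. -/
structure IsRaisingComponent (X : Finset G) (χ : G → ℝ) (δ : ℝ) (k l q : ℕ)
    (f : TupleChain G (q + 1) →ₗ[ℤ] TupleChain G (q + 1)) : Prop where
  isEquivariantAt : IsEquivariantAt X k f
  raisesBy : RaisesBy X χ δ k l f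
  augBnd_eq_zero : ∀ c ∈ ripsChains X Set.univ k (q + 1), augBnd q c = 0 → augBnd q (f c) = 0

theorem isRaisingComponent_vertexMap_mul_right (hχ : IsCharacter χ) (t : G) :
    IsRaisingComponent X χ (χ t) k l 0 (vertexMap (· * t) 1) where
  isEquivariantAt g c _ := by
    have hcomm : (· * t) ∘ (g * ·) = (g * ·) ∘ (· * t) := funext fun x => mul_assoc g x t
    rw [vertexMap_vertexMap, vertexMap_vertexMap, hcomm]
  raisesBy := raisesBy_iff.2 fun σ _ => ⟨0, by
    rw [vertexMap_single]
    refine single_mem_ripsChains (fun i : Fin 1 => ?_) fun i j : Fin 1 => ?_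
    · rw [Subsingleton.elim i 0]
      exact (hχ (σ 0) t).ge
    · rw [Subsingleton.elim i j, wordDist_self]
      exact Nat.zero_le l⟩
  augBnd_eq_zero c _ hc := by rw [augBnd_vertexMap, hc, map_zero]

theorem IsRaisingComponent.exists_succ (hχ : IsCharacter χ) {l' : ℕ} {t : G}
    (hb : BoundsAt X (halfSpace χ 0) q l l')
    {f : TupleChain G (q + 1) →ₗ[ℤ] TupleChain G (q + 1)}
    (hf : IsRaisingComponent X χ (χ t) k l q f) :
    ∃ F, IsRaisingComponent X χ (χ t) k l' (q + 1) F ∧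
      ∀ c ∈ ripsChains X Set.univ k (q + 2), augBnd (q + 1) (F c) = f (augBnd (q + 1) c) := by
  obtain ⟨F, hF, hFt, hfill⟩ := hb.exists_equivariant_filling hχ (k := k)
    (f := f ∘ₗ augBnd (q + 1))
    (fun g c hc => by
      rw [LinearMap.comp_apply, augBnd_vertexMap,
        hf.isEquivariantAt g _ (augBnd_mem_ripsChains hc), LinearMap.comp_apply])
    (fun r c hc => hf.raisesBy r _ (augBnd_mem_ripsChains hc))
    (fun c hc => hf.augBnd_eq_zero _ (augBnd_mem_ripsChains hc) (augBnd_augBnd c))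
  refine ⟨F, ⟨hF, hFt, fun c hc hc₀ => ?_⟩, hfill⟩
  rw [hfill c hc, LinearMap.comp_apply, hc₀, map_zero]

theorem exists_seq_of_forall_exists {α : ℕ → Type*} [∀ q, Nonempty (α q)]
    {P : ∀ q, α q → Prop} {R : ∀ q, α q → α (q + 1) → Prop} {a : α 0} (ha : P 0 a)
    (h : ∀ q < m, ∀ x, P q x → ∃ y, P (q + 1) y ∧ R q x y) :
    ∃ f : ∀ q, α q, f 0 = a ∧ (∀ q ≤ m, P q (f q)) ∧ ∀ q < m, R q (f q) (f (q + 1)) := by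
  choose! next hP hR using h
  let f (q : ℕ) : α q := Nat.rec a next q
  have hPf (q : ℕ) (hq : q ≤ m) : P q (f q) := by
    induction q with
    | zero => exact ha
    | succ q ih => exact hP q hq (f q) (ih (Nat.le_of_succ_le hq))
  exact ⟨f, rfl, hPf, fun q hq => hR q hq (f q) (hPf q hq.le)⟩

theorem TypeFP.exists_connecting_vector {S : Set G} (h : TypeFP X S m) :
    ∃ kv : ℕ → ℕ, ∀ q < m, BoundsAt X S q (kv q) (kv (q + 1)) := by
  obtain ⟨kv, -, -, hkv⟩ := exists_seq_of_forall_exists (α := fun _ => ℕ) (a := 0)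
    (P := fun _ _ => True) (R := fun q => BoundsAt X S q) trivial
    fun q hq k _ => (h q hq k).imp fun _ hl => ⟨trivial, hl.2⟩
  exact ⟨kv, hkv⟩

theorem eventually_hasRaisingEndo (hχ : IsCharacter χ) (hne : ∃ g, χ g ≠ 0) {kv : ℕ → ℕ}
    (hkv : ∀ q < m, BoundsAt X (halfSpace χ 0) q (kv q) (kv (q + 1))) :
    ∀ᶠ k in Filter.atTop, HasRaisingEndo X χ k m := by
  obtain ⟨t, ht⟩ := hχ.exists_le_apply hne 1
  filter_upwards [Filter.eventually_ge_atTop ((Finset.range (m + 1)).sup kv)] with k hk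
  obtain ⟨φ, hφ₀, hφ, hφ_succ⟩ := exists_seq_of_forall_exists
    (α := fun q => TupleChain G (q + 1) →ₗ[ℤ] TupleChain G (q + 1))
    (P := fun q => IsRaisingComponent X χ (χ t) k (kv q) q)
    (R := fun q f F => ∀ c ∈ ripsChains X Set.univ k (q + 2),
      augBnd (q + 1) (F c) = f (augBnd (q + 1) c))
    (isRaisingComponent_vertexMap_mul_right hχ t)
    (fun q hq _ hf => hf.exists_succ hχ (hkv q hq))
  have hkv_le {q : ℕ} (hq : q ≤ m) : kv q ≤ k :=
    (Finset.le_sup (Finset.mem_range.2 (Nat.lt_succ_of_le hq))).trans hk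
  refine ⟨φ, isChainEndo_iff.2 ⟨fun q hq c hc => ?_, fun q hq => (hφ q hq).isEquivariantAt,
    fun c _ => ?_, hφ_succ⟩, fun q hq c hc => ?_⟩
  · exact ripsChains_mono le_rfl (hkv_le hq) ((hφ q hq).raisesBy.map_mem_univ hc)
  · rw [hφ₀, augBnd_vertexMap, vertexMap_zero_congr _ id, vertexMap_id]
  · exact (hφ q hq).raisesBy.vchain_sub_pos (zero_lt_one.trans_le ht) (vRChain_iff.1 hc)

theorem IsChainEndo.exists_homotopy (hφ : IsChainEndo X k m φ) (hFP : TypeFP X Set.univ m)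
    (hq : q < m) :
    ∃ l ≥ k, ∃ F : TupleChain G (q + 1) →ₗ[ℤ] TupleChain G (q + 2), IsEquivariantAt X k F ∧
      (∀ c ∈ ripsChains X Set.univ k (q + 1), F c ∈ ripsChains X Set.univ l (q + 2)) ∧
      ∀ c ∈ ripsChains X Set.univ k (q + 1), augBnd q c = 0 →
        augBnd (q + 1) (F c) = φ q c - c := by
  obtain ⟨hφk, hφG, hφ₀, hφ_succ⟩ := isChainEndo_iff.1 hφ
  induction q with
  | zero =>
    obtain ⟨l, hkl, hb⟩ := hFP 0 hq k
    obtain ⟨F, hFG, hFl, hF⟩ := hb.exists_equivariant_filling_univ (k := k)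
      (f := φ 0 - LinearMap.id)
      (fun g c hc => by simp [hφG 0 hq.le g c hc])
      (fun c hc => sub_mem (hφk 0 hq.le c hc) hc)
      (fun c hc => by simp [hφ₀ c hc])
    exact ⟨l, hkl, F, hFG, hFl, fun c hc _ => hF c hc⟩
  | succ q ih =>
    obtain ⟨l, hkl, F, hFG, hFl, hF⟩ := ih (Nat.lt_of_succ_lt hq)
    obtain ⟨l', hll', hb⟩ := hFP (q + 1) hq l
    obtain ⟨F', hFG', hFl', hF'⟩ := hb.exists_equivariant_filling_univ (k := k)
      (f := φ (q + 1) - LinearMap.id - F ∘ₗ augBnd (q + 1))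
      (fun g c hc => by
        simp [hφG _ hq.le g c hc, augBnd_vertexMap, hFG g _ (augBnd_mem_ripsChains hc)])
      (fun c hc => sub_mem (ripsChains_mono le_rfl hkl (sub_mem (hφk _ hq.le c hc) hc))
        (hFl _ (augBnd_mem_ripsChains hc)))
      (fun c hc => by
        simp [hφ_succ q hq.le c hc, hF _ (augBnd_mem_ripsChains hc) (augBnd_augBnd c)])
    refine ⟨l', hkl.trans hll', F', hFG', hFl', fun c hc hc₀ => ?_⟩
    simp [hF' c hc, hc₀]

theorem exists_filling_of_raisesBy {D : ℝ}
    {f : TupleChain G (q + 1) →ₗ[ℤ] TupleChain G (q + 1)} (hf : RaisesBy X χ δ k k f)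
    {f' : TupleChain G (q + 2) →ₗ[ℤ] TupleChain G (q + 2)} (hf' : RaisesBy X χ δ k k f')
    (hff' : ∀ c ∈ ripsChains X Set.univ k (q + 2), augBnd (q + 1) (f' c) = f (augBnd (q + 1) c))
    {F : TupleChain G (q + 1) →ₗ[ℤ] TupleChain G (q + 2)} (hF : RaisesBy X χ D k l F)
    (hFf : ∀ c ∈ ripsChains X Set.univ k (q + 1), augBnd q c = 0 →
      augBnd (q + 1) (F c) = f c - c)
    (hδ : 0 ≤ δ) (hD : D ≤ 0) (hkl : k ≤ l) (N : ℕ) {c : TupleChain G (q + 2)}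
    (hc : c ∈ ripsChains X (halfSpace χ (-(N * δ))) k (q + 2))
    (hz : augBnd (q + 1) c ∈ ripsChains X (halfSpace χ 0) k (q + 1)) :
    ∃ y ∈ ripsChains X (halfSpace χ D) l (q + 2), augBnd (q + 1) y = augBnd (q + 1) c := by
  induction N generalizing c with
  | zero =>
    rw [Nat.cast_zero, zero_mul, neg_zero] at hc
    exact ⟨c, ripsChains_halfSpace_anti hD (ripsChains_mono le_rfl hkl hc), rfl⟩
  | succ N ih =>
    set z := augBnd (q + 1) c
    have hfz : augBnd (q + 1) (f' c) = f z := hff' c (ripsChains_le_univ hc)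
    have hf'c : f' c ∈ ripsChains X (halfSpace χ (-(N * δ))) k (q + 2) :=
      ripsChains_halfSpace_anti (by push_cast; linarith) (hf' _ c hc)
    obtain ⟨y, hy, hyz⟩ := ih hf'c
      (hfz ▸ ripsChains_halfSpace_anti (by linarith) (hf 0 z hz))
    have hFz : F z ∈ ripsChains X (halfSpace χ D) l (q + 2) := by simpa using hF 0 z hz
    refine ⟨y - F z, sub_mem hy hFz, ?_⟩
    rw [map_sub, hyz, hfz, hFf z (ripsChains_le_univ hz) (augBnd_augBnd c), sub_sub_cancel]

theorem typeFP_of_frequently_hasRaisingEndo (hX : Subgroup.closure (X : Set G) = ⊤)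
    (hFP : TypeFP X Set.univ m) (hχ : IsCharacter χ) (hne : ∃ g, χ g ≠ 0)
    (h : ∃ᶠ k in Filter.atTop, HasRaisingEndo X χ k m) : TypeFP X (halfSpace χ 0) m := by
  intro q hq k
  obtain ⟨l, hkl, hl⟩ := hFP q hq k
  obtain ⟨K, hlK, φ, hφ, hv⟩ := Filter.frequently_atTop.1 h l
  obtain ⟨hφK, hφG, -, hφ_succ⟩ := isChainEndo_iff.1 hφ
  obtain ⟨L, hKL, F, hFG, hFL, hF⟩ := hφ.exists_homotopy hFP hq
  have raises {p : ℕ} (hp : p ≤ m) : ∃ δ > 0, RaisesBy X χ δ K K (φ p) :=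
    (hφG p hp).exists_pos_raisesBy hX hχ (hφK p hp) fun c hc => hv p hp c (vRChain_iff.2 hc)
  obtain ⟨δ₁, hδ₁, hφ₁⟩ := raises hq.le
  obtain ⟨δ₂, hδ₂, hφ₂⟩ := raises hq
  obtain ⟨D, hD, hFD⟩ := hFG.exists_nonpos_raisesBy hX hχ hFL
  obtain ⟨t, ht⟩ := hχ.exists_le_apply hne (-D)
  have hδ : 0 < min δ₁ δ₂ := lt_min hδ₁ hδ₂
  refine ⟨L + 2 * wordLength X t, by omega, boundsAt_iff.2 fun z hz hz₀ => ?_⟩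
  obtain ⟨c, hc, rfl⟩ := boundsAt_iff.1 hl z (ripsChains_le_univ hz) hz₀
  obtain ⟨r, hr⟩ := exists_mem_ripsChains_halfSpace χ (ripsChains_mono le_rfl hlK hc)
  obtain ⟨N, hN⟩ := Archimedean.arch (-r) hδ
  rw [nsmul_eq_mul] at hN
  have hzK := ripsChains_mono le_rfl (hkl.le.trans hlK) hz
  obtain ⟨y, hy, hyz⟩ := exists_filling_of_raisesBy (hφ₁.anti (min_le_left _ _))
    (hφ₂.anti (min_le_right _ _)) (hφ_succ q hq) hFD hF hδ.le hD hKL N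
    (ripsChains_halfSpace_anti (neg_le.1 hN) hr) hzK
  exact exists_filling_halfSpace_zero hX hχ (by linarith) (ripsChains_mono le_rfl hKL hzK)
    hz₀ (ripsChains_halfSpace_anti (by linarith) hy) hyz

end ChainEndomorphisms

/-- The homological `Σ^m`-criterion: for `G` of type `FP_m` and a nonzero character `χ`,
membership `χ ∈ Σ^m(G;ℤ)` is equivalent to the existence of a connecting vector for `G_χ`,
and to the existence (for all large scales) of a valuation-raising chain endomorphism. -/
theorem stmt10 {G : Type*} [Group G] (X : Finset G)
    (hX : Subgroup.closure (X : Set G) = ⊤) (m : ℕ)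
    (hFP : TypeFP X Set.univ m)
    (χ : G → ℝ) (hχ : IsCharacter χ) (hne : ∃ g, χ g ≠ 0) :
    (TypeFP X {g : G | 0 ≤ χ g} m ↔
      ∃ kv : ℕ → ℕ, ∀ q < m, BoundsAt X {g : G | 0 ≤ χ g} q (kv q) (kv (q + 1))) ∧
    (TypeFP X {g : G | 0 ≤ χ g} m ↔
      ∃ k₀ : ℕ, ∀ k ≥ k₀,
        ∃ φ : ∀ q : ℕ, ((Fin (q + 1) → G) →₀ ℤ) →ₗ[ℤ] ((Fin (q + 1) → G) →₀ ℤ),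
          IsChainEndo X k m φ ∧
          ∀ q ≤ m, ∀ c : (Fin (q + 1) → G) →₀ ℤ, VRChain X Set.univ q k c → c ≠ 0 →
            0 < vchain χ (φ q c) - vchain χ c) := by
  have exists_raisingEndo (h : ∃ kv : ℕ → ℕ, ∀ q < m, BoundsAt X (halfSpace χ 0) q (kv q)
      (kv (q + 1))) : ∀ᶠ k in Filter.atTop, HasRaisingEndo X χ k m :=
    eventually_hasRaisingEndo hχ hne h.choose_spec
  have typeFP (h : ∀ᶠ k in Filter.atTop, HasRaisingEndo X χ k m) : TypeFP X (halfSpace χ 0) m :=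
    typeFP_of_frequently_hasRaisingEndo hX hFP hχ hne h.frequently
  refine ⟨⟨TypeFP.exists_connecting_vector, fun h => typeFP (exists_raisingEndo h)⟩, ?_⟩
  refine Iff.trans ⟨fun h => ?_, typeFP⟩ Filter.eventually_atTop
  exact exists_raisingEndo h.exists_connecting_vector
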